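/- Let A be a unital C*-algebra containing elements u, v with u*u = v*v = uu* + vv* = 1 and u*v = v*u = 0. Then the map φ : A → M₂(A) defined by φ(x) := [[u* x u, u* x v], [v* x u, v* x v]] is a unital bijective *-homomorphism of A onto the C*-algebra M₂(A) — hence an isometric *-isomorphism — whose inverse is the map ψ : M₂(A) → A given by ψ([[a, b], [c, d]]) := u a u* + u b v* + v c u* + v d v*. -/

import Mathlib

/-!
The relations on `u` and `v` say that the row `S = (u v)`, viewed as a `1 × 2` matrix over `A`, is
unitary: `S* S = 1` in `M₂(A)` and `S S* = 1` in `A`. Conjugation by a unitary, even one that is not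
square, is a `⋆`-isomorphism, so `x ↦ S* x S` identifies `A = M₁(A)` with `M₂(A)`, with inverse
`M ↦ S M S*`.
-/

open scoped Matrix

section ConjStarAlgEquiv

variable (R : Type*) {A m n : Type*} [CommSemiring R] [Semiring A] [StarRing A] [Algebra R A]
  [Fintype m] [Fintype n] [DecidableEq m] [DecidableEq n]

/-- Conjugation `X ↦ Sᴴ * X * S` by a unitary matrix `S` which is not required to be square, as a
`⋆`-algebra equivalence. The rectangular analogue of `Unitary.conjStarAlgAut`. -/
def matrixConjStarAlgEquiv (S : Matrix m n A) (hS : Sᴴ * S = 1) (hS' : S * Sᴴ = 1) :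
    Matrix m m A ≃⋆ₐ[R] Matrix n n A where
  toFun X := Sᴴ * X * S
  invFun Y := S * Y * Sᴴ
  left_inv X := by
    calc S * (Sᴴ * X * S) * Sᴴ = (S * Sᴴ) * X * (S * Sᴴ) := by simp only [Matrix.mul_assoc]
      _ = X := by rw [hS', Matrix.one_mul, Matrix.mul_one]
  right_inv Y := by
    calc Sᴴ * (S * Y * Sᴴ) * S = (Sᴴ * S) * Y * (Sᴴ * S) := by simp only [Matrix.mul_assoc]
      _ = Y := by rw [hS, Matrix.one_mul, Matrix.mul_one]
  map_mul' X Y := by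
    calc Sᴴ * (X * Y) * S = Sᴴ * X * (S * Sᴴ) * Y * S := by
          rw [hS', Matrix.mul_one, Matrix.mul_assoc Sᴴ X Y]
      _ = Sᴴ * X * S * (Sᴴ * Y * S) := by simp only [Matrix.mul_assoc]
  map_add' X Y := by rw [Matrix.mul_add, Matrix.add_mul]
  map_star' X := by
    simp only [Matrix.star_eq_conjTranspose, Matrix.conjTranspose_mul,
      Matrix.conjTranspose_conjTranspose, Matrix.mul_assoc]
  map_smul' r X := by rw [Matrix.mul_smul, Matrix.smul_mul]

theorem matrixConjStarAlgEquiv_apply (S : Matrix m n A) (hS : Sᴴ * S = 1) (hS' : S * Sᴴ = 1)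
    (X : Matrix m m A) : matrixConjStarAlgEquiv R S hS hS' X = Sᴴ * X * S :=
  rfl

theorem matrixConjStarAlgEquiv_symm_apply (S : Matrix m n A) (hS : Sᴴ * S = 1) (hS' : S * Sᴴ = 1)
    (Y : Matrix n n A) : (matrixConjStarAlgEquiv R S hS hS').symm Y = S * Y * Sᴴ :=
  rfl

end ConjStarAlgEquiv

/-- The identification of a `⋆`-algebra with its `1 × 1` matrices. -/
def matrixUniqueStarAlgEquiv (R A ι : Type*) [Unique ι] [NonUnitalNonAssocSemiring A] [Star A]
    [SMul R A] : A ≃⋆ₐ[R] Matrix ι ι A where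
  toFun x := Matrix.of fun _ _ => x
  invFun M := M default default
  left_inv _ := rfl
  right_inv M := by
    ext i j
    exact congrArg₂ M (Unique.default_eq i) (Unique.default_eq j)
  map_mul' x y := by
    ext
    simp only [Matrix.mul_apply, Matrix.of_apply, Fintype.sum_unique]
  map_add' _ _ := rfl
  map_star' _ := rfl
  map_smul' _ _ := rfl

theorem matrixUniqueStarAlgEquiv_apply (R : Type*) {A ι : Type*} [Unique ι]
    [NonUnitalNonAssocSemiring A] [Star A] [SMul R A] (x : A) (i j : ι) :
    matrixUniqueStarAlgEquiv R A ι x i j = x :=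
  rfl

theorem matrixUniqueStarAlgEquiv_symm_apply (R : Type*) {A ι : Type*} [Unique ι]
    [NonUnitalNonAssocSemiring A] [Star A] [SMul R A] (M : Matrix ι ι A) :
    (matrixUniqueStarAlgEquiv R A ι).symm M = M default default :=
  rfl

/-- A finite family of isometries with pairwise orthogonal ranges whose range projections sum to
`1`. For `n ≥ 2` indices these are the defining relations of the Cuntz algebra `𝒪ₙ`. -/
structure IsCuntzFamily {A ι : Type*} [Semiring A] [Star A] [Fintype ι] (s : ι → A) : Prop where
  star_mul_self (i : ι) : star (s i) * s i = 1
  star_mul_of_ne {i j : ι} (hij : i ≠ j) : star (s i) * s j = 0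
  sum_mul_star : ∑ i, s i * star (s i) = 1

namespace IsCuntzFamily

section UnitaryRow

variable {A ι κ : Type*} [Semiring A] [Star A] [Fintype ι] {s : ι → A}

theorem conjTranspose_replicateRow_mul_self [DecidableEq ι] [Unique κ] (hs : IsCuntzFamily s) :
    (Matrix.replicateRow κ s)ᴴ * Matrix.replicateRow κ s = 1 := by
  ext i j
  simp only [Matrix.mul_apply, Fintype.sum_unique, Matrix.conjTranspose_apply,
    Matrix.replicateRow_apply]
  obtain rfl | hij := eq_or_ne i j
  · rw [hs.star_mul_self, Matrix.one_apply_eq]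
  · rw [hs.star_mul_of_ne hij, Matrix.one_apply_ne hij]

theorem replicateRow_mul_conjTranspose_self [DecidableEq κ] [Subsingleton κ]
    (hs : IsCuntzFamily s) :
    Matrix.replicateRow κ s * (Matrix.replicateRow κ s)ᴴ = 1 := by
  ext i j
  obtain rfl := Subsingleton.elim i j
  simp only [Matrix.mul_apply, Matrix.conjTranspose_apply, Matrix.replicateRow_apply,
    hs.sum_mul_star, Matrix.one_apply_eq]

end UnitaryRow

section MatrixStarAlgEquiv

variable (R : Type*) {A ι : Type*} [CommSemiring R] [Semiring A] [StarRing A] [Algebra R A]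
  [Fintype ι] [DecidableEq ι] {s : ι → A}

/-- The `⋆`-algebra equivalence `A ≃⋆ₐ[R] Matrix ι ι A` induced by a Cuntz family `s`: conjugation
by `s` viewed as a unitary row. -/
def matrixStarAlgEquiv (hs : IsCuntzFamily s) : A ≃⋆ₐ[R] Matrix ι ι A :=
  (matrixUniqueStarAlgEquiv R A Unit).trans <|
    matrixConjStarAlgEquiv R (Matrix.replicateRow Unit s)
      hs.conjTranspose_replicateRow_mul_self hs.replicateRow_mul_conjTranspose_self

theorem matrixStarAlgEquiv_apply (hs : IsCuntzFamily s) (x : A) (i j : ι) :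
    hs.matrixStarAlgEquiv R x i j = star (s i) * x * s j := by
  rw [matrixStarAlgEquiv, StarAlgEquiv.trans_apply, matrixConjStarAlgEquiv_apply]
  simp only [Matrix.mul_apply, Fintype.sum_unique, Matrix.conjTranspose_apply,
    Matrix.replicateRow_apply, matrixUniqueStarAlgEquiv_apply]

theorem matrixStarAlgEquiv_symm_apply (hs : IsCuntzFamily s) (M : Matrix ι ι A) :
    (hs.matrixStarAlgEquiv R).symm M = ∑ i, ∑ j, s i * M i j * star (s j) := by
  rw [matrixStarAlgEquiv, StarAlgEquiv.symm_trans_apply, matrixUniqueStarAlgEquiv_symm_apply,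
    matrixConjStarAlgEquiv_symm_apply]
  simp only [Matrix.mul_apply, Matrix.replicateRow_apply, Matrix.conjTranspose_apply,
    Finset.sum_mul]
  exact Finset.sum_comm

end MatrixStarAlgEquiv

end IsCuntzFamily

theorem isCuntzFamily_pair {A : Type*} [Semiring A] [Star A] {u v : A}
    (huu : star u * u = 1) (hvv : star v * v = 1) (hsum : u * star u + v * star v = 1)
    (huv : star u * v = 0) (hvu : star v * u = 0) : IsCuntzFamily ![u, v] where
  star_mul_self := Fin.forall_fin_two.mpr ⟨huu, hvv⟩
  star_mul_of_ne {i j} hij := by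
    fin_cases i <;> fin_cases j
    exacts [absurd rfl hij, huv, hvu, absurd rfl hij]
  sum_mul_star := by rw [Fin.sum_univ_two]; exact hsum

theorem cstar_iso_matrix_two_general (R : Type*) {A ι : Type*} [CommSemiring R] [Semiring A]
    [StarRing A] [Algebra R A] [Fintype ι] {s : ι → A} (hs : IsCuntzFamily s) :
    ∃ φ : A ≃⋆ₐ[R] Matrix ι ι A,
      (∀ x : A, φ x = Matrix.of fun i j => star (s i) * x * s j) ∧
      (∀ M : Matrix ι ι A, φ.symm M = ∑ i, ∑ j, s i * M i j * star (s j)) := by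
  classical
  exact ⟨hs.matrixStarAlgEquiv R, fun x => Matrix.ext (hs.matrixStarAlgEquiv_apply R x),
    hs.matrixStarAlgEquiv_symm_apply R⟩

/-- Let `A` be a unital C*-algebra containing elements `u, v` with
`u*u = v*v = uu* + vv* = 1` and `u*v = v*u = 0`.  Then the map
`φ(x) = [[u* x u, u* x v], [v* x u, v* x v]]` is a unital bijective ⋆-homomorphism
(hence, with respect to the unique C*-norm on `M₂(A)`, an isometric ⋆-isomorphism) of `A` onto
`M₂(A)`, with inverse `ψ([[a,b],[c,d]]) = u a u* + u b v* + v c u* + v d v*`. -/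
theorem cstar_iso_matrix_two
    {A : Type*} [NormedRing A] [StarRing A] [CStarRing A]
    [NormedAlgebra ℂ A] [StarModule ℂ A] [CompleteSpace A]
    (u v : A)
    (huu : star u * u = 1) (hvv : star v * v = 1)
    (hsum : u * star u + v * star v = 1)
    (huv : star u * v = 0) (hvu : star v * u = 0) :
    ∃ φ : A ≃⋆ₐ[ℂ] Matrix (Fin 2) (Fin 2) A,
      (∀ x : A,
        φ x = !![star u * x * u, star u * x * v; star v * x * u, star v * x * v]) ∧
      (∀ M : Matrix (Fin 2) (Fin 2) A,
        φ.symm M =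
          u * M 0 0 * star u + u * M 0 1 * star v + v * M 1 0 * star u + v * M 1 1 * star v) := by
  obtain ⟨φ, hφ, hφ_symm⟩ :=
    cstar_iso_matrix_two_general ℂ (isCuntzFamily_pair huu hvv hsum huv hvu)
  refine ⟨φ, fun x => (hφ x).trans (Matrix.eta_fin_two _), fun M => ?_⟩
  simp [hφ_symm, Fin.sum_univ_two, add_assoc]
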